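/- arXiv:1707.09652 — 2 statements merged into one kernel-verified Lean document; each statement's English description precedes it below -/
import Mathlib

section
/- Let F be a finite field of cardinality Q, let k and r be natural numbers, and let A be an r × k integer matrix such that the subgroup R(A) of ℤ^k generated by the rows of A contains (Q−1)·ℤ^k. Then the number of k-tuples (x₁, …, x_k) of nonzero elements of F satisfying x₁^{A_{i1}} · x₂^{A_{i2}} ⋯ x_k^{A_{ik}} = 1 for every row index i equals the index of R(A) in ℤ^k, i.e., the cardinality of ℤ^k / R(A). -/
theorem hasEnoughRootsOfUnity_of_dvd_card_units (F : Type*) [Field F] [Finite F] {n : ℕ}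
    (hn : n ∣ Nat.card Fˣ) : HasEnoughRootsOfUnity F n := by
  have : NeZero (Nat.card Fˣ) := ⟨Nat.card_pos.ne'⟩
  have : HasEnoughRootsOfUnity F (Nat.card Fˣ) :=
    { prim := by
        obtain ⟨g, hg⟩ := IsCyclic.exists_ofOrder_eq_natCard (α := Fˣ)
        exact ⟨g, IsPrimitiveRoot.coe_units_iff.mpr (hg ▸ IsPrimitiveRoot.orderOf g)⟩
      cyc := inferInstance }
  exact HasEnoughRootsOfUnity.of_dvd F hn

/-- Linear maps out of a quotient are the linear maps killing the submodule. -/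
def liftQSpanRangeEquiv {R M N ι : Type*} [Ring R] [AddCommGroup M] [Module R M]
    [AddCommGroup N] [Module R N] (v : ι → M) :
    (M ⧸ Submodule.span R (Set.range v) →ₗ[R] N) ≃ {f : M →ₗ[R] N // ∀ i, f (v i) = 0} where
  toFun g := ⟨g ∘ₗ Submodule.mkQ _, fun i => by
    have : Submodule.mkQ (Submodule.span R (Set.range v)) (v i) = 0 := by
      simpa using Submodule.subset_span (Set.mem_range_self i)
    rw [LinearMap.comp_apply, this, map_zero]⟩
  invFun f := Submodule.liftQ _ f.1 <| Submodule.span_le.mpr <| by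
    rintro _ ⟨i, rfl⟩
    exact f.2 i
  left_inv g := Submodule.linearMap_qext _ <| Submodule.liftQ_mkQ _ _ _
  right_inv f := Subtype.ext <| Submodule.liftQ_mkQ _ _ _

/-- Solutions of monomial equations are the homomorphisms out of the cokernel. -/
noncomputable def monomialSolutionsEquiv {G ι κ : Type*} [CommGroup G] [Fintype κ]
    (A : ι → κ → ℤ) :
    {x : κ → G // ∀ i, (∏ j, x j ^ A i j) = 1} ≃
      (Multiplicative ((κ → ℤ) ⧸ Submodule.span ℤ (Set.range A)) →* G) :=
  (Equiv.subtypeEquiv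
      ((Equiv.arrowCongr (Equiv.refl κ) Additive.ofMul).trans
        ((Pi.basisFun ℤ κ).constr ℤ (M' := Additive G)).toEquiv)
      (fun x => forall_congr' fun i => by
        simp [Module.Basis.constr_apply_fintype, ← ofMul_zpow, ← ofMul_prod])).trans <|
    (liftQSpanRangeEquiv A).symm.trans <|
      (addMonoidHomLequivInt ℤ).symm.toEquiv.trans AddMonoidHom.toMultiplicativeLeft


/-- Let `F` be a finite field of cardinality `Q`, and let `A` be an `r × k` integer
matrix whose row span `R(A)` contains `(Q-1)·ℤ^k`. Then the number of `k`-tuples of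
nonzero elements of `F` satisfying the monomial equations given by the rows of `A`
equals the index of `R(A)` in `ℤ^k`. -/
theorem card_monomial_solutions_eq_index (F : Type*) [Field F] [Fintype F]
    (Q : ℕ) (hQ : Fintype.card F = Q) (k r : ℕ) (A : Matrix (Fin r) (Fin k) ℤ)
    (hQA : ∀ v : Fin k → ℤ, ((Q : ℤ) - 1) • v ∈ Submodule.span ℤ (Set.range A)) :
    Nat.card {x : Fin k → Fˣ // ∀ i : Fin r, (∏ j : Fin k, x j ^ A i j) = 1} =
      Nat.card ((Fin k → ℤ) ⧸ Submodule.span ℤ (Set.range A)) := by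
  subst hQ
  have hcard : ((Fintype.card F : ℤ) - 1) = (Nat.card Fˣ : ℤ) := by
    rw [Nat.card_units, Nat.card_eq_fintype_card, Nat.cast_sub Fintype.card_pos, Nat.cast_one]
  rw [hcard] at hQA
  have htors (y : (Fin k → ℤ) ⧸ Submodule.span ℤ (Set.range A)) : Nat.card Fˣ • y = 0 := by
    induction y using Submodule.Quotient.induction_on with
    | H v =>
      rw [← natCast_zsmul, ← Submodule.Quotient.mk_smul, Submodule.Quotient.mk_eq_zero]
      exact hQA v
  have : Finite ((Fin k → ℤ) ⧸ Submodule.span ℤ (Set.range A)) :=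
    Module.finite_of_fg_torsion _ fun {y} =>
      ⟨⟨Nat.card Fˣ, mem_nonZeroDivisors_of_ne_zero (mod_cast Nat.card_pos.ne')⟩, by
        simpa [Submonoid.smul_def] using htors y⟩
  have : HasEnoughRootsOfUnity F
      (Monoid.exponent (Multiplicative ((Fin k → ℤ) ⧸ Submodule.span ℤ (Set.range A)))) :=
    hasEnoughRootsOfUnity_of_dvd_card_units F (Monoid.exponent_dvd_of_forall_pow_eq_one htors)
  rw [Nat.card_congr (monomialSolutionsEquiv A),
    CommGroup.card_monoidHom_of_hasEnoughRootsOfUnity]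
  rfl
end

section
/- Let n and k be positive integers and let A be a matrix over ℤ[X] with k columns whose rows include, for each j with 1 ≤ j ≤ k, the row (X^n − 1)·e_j (the vector with X^n − 1 in position j and 0 elsewhere). Then there exist an integer polynomial f, a natural number r, rational numbers α, α₁, …, α_r, integers m₁, …, m_r with m_i > 1, and integers n₁, …, n_r with 0 < n_i < m_i, such that for every integer q ≥ 2, the number of vectors y ∈ (ℤ/(q^n − 1)ℤ)^k satisfying A(q)·y = 0 equals (α + Σ_{i=1}^{r} α_i · gcd(q − n_i, m_i)) · |f(q)|, where A(q) denotes the integer matrix obtained by evaluating every entry of A at q. -/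
/-- Over `ℤ`, a matrix whose row lattice contains a nonzero multiple of every standard basis
vector has the same row lattice as some square matrix. -/
theorem exists_square_matrix_same_row_lattice {t k : ℕ} {M : ℤ} (hM : M ≠ 0)
    (A : Matrix (Fin t) (Fin k) ℤ)
    (hA : ∀ j : Fin k, ∃ i : Fin t, A i = Pi.single j M) :
    ∃ (B : Matrix (Fin k) (Fin k) ℤ) (T : Matrix (Fin k) (Fin t) ℤ)
      (C : Matrix (Fin t) (Fin k) ℤ) (C' : Matrix (Fin k) (Fin k) ℤ),
      B = T * A ∧ A = C * B ∧ C' * B = M • (1 : Matrix (Fin k) (Fin k) ℤ) := by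
  set L : Submodule ℤ (Fin k → ℤ) := Submodule.span ℤ (Set.range A) with hL
  have hrow : ∀ i, A i ∈ L := fun i => Submodule.subset_span ⟨i, rfl⟩
  have hmul : ∀ v : Fin k → ℤ, M • v ∈ L := by
    intro v
    have : M • v = ∑ j, v j • (Pi.single j M : Fin k → ℤ) := by
      ext l
      simp [Finset.sum_apply, Pi.single_apply, mul_comm]
    rw [this]
    refine Submodule.sum_mem _ fun j _ => Submodule.smul_mem _ _ ?_
    obtain ⟨i, hi⟩ := hA j
    exact hi ▸ hrow i
  have hfin : Module.finrank ℤ L = k := by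
    apply le_antisymm
    · simpa using Submodule.finrank_le L
    · let g : (Fin k → ℤ) →ₗ[ℤ] L :=
        LinearMap.codRestrict L (M • LinearMap.id) (fun v => by simpa using hmul v)
      have hg : Function.Injective g := by
        intro v w h
        have := congrArg Subtype.val h
        simp only [g, LinearMap.codRestrict_apply, LinearMap.smul_apply, LinearMap.id_apply] at this
        exact smul_right_injective _ hM this
      simpa using LinearMap.finrank_le_finrank_of_injective hg
  let b := Module.finBasisOfFinrankEq ℤ L hfin
  have hb : ∀ i, ∃ c : Fin t → ℤ, ∑ l, c l • A l = (b i : Fin k → ℤ) := fun i =>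
    (Submodule.mem_span_range_iff_exists_fun ℤ).1 (b i).2
  choose T hT using hb
  have hrepr : ∀ v (hv : v ∈ L), v = ∑ i, b.repr ⟨v, hv⟩ i • (b i : Fin k → ℤ) := by
    intro v hv
    have := congrArg L.subtype (b.sum_repr ⟨v, hv⟩)
    rw [map_sum] at this
    exact this.symm
  refine ⟨Matrix.of fun i => b i, Matrix.of T, Matrix.of fun i j => b.repr ⟨A i, hrow i⟩ j,
    Matrix.of fun i j => b.repr ⟨M • Pi.single i 1, hmul _⟩ j, ?_, ?_, ?_⟩
  · ext i j
    rw [Matrix.of_apply, ← hT i]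
    simp [Matrix.mul_apply, Finset.sum_apply]
  · ext i j
    conv_lhs => rw [hrepr (A i) (hrow i)]
    simp [Matrix.mul_apply, Finset.sum_apply]
  · ext i j
    have := congrFun (hrepr (M • Pi.single i 1) (hmul _)) j
    simp only [Finset.sum_apply, Pi.smul_apply, smul_eq_mul] at this
    simp only [Matrix.mul_apply, Matrix.of_apply, Matrix.smul_apply, smul_eq_mul,
      Matrix.one_apply]
    rw [← this, Pi.single_apply]
    simp [eq_comm]

/-- If `C * B = M • 1` over `ℤ`, then `B` has exactly `|det B|` zeros modulo `M`. -/
theorem card_ker_mod_of_mul_eq_smul_one {k M : ℕ} (hM : M ≠ 0)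
    (B C : Matrix (Fin k) (Fin k) ℤ)
    (hCB : C * B = (M : ℤ) • (1 : Matrix (Fin k) (Fin k) ℤ)) :
    Nat.card {y : Fin k → ZMod M // (B.map (Int.cast : ℤ → ZMod M)).mulVec y = 0} =
      B.det.natAbs := by
  have hMz : (M : ℤ) ≠ 0 := by exact_mod_cast hM
  have hdet : C.det * B.det ≠ 0 := by
    rw [← Matrix.det_mul, hCB, Matrix.det_smul, Matrix.det_one]
    simp [hM]
  have hBdet : B.det ≠ 0 := right_ne_zero_of_mul hdet
  have hCdet : C.det ≠ 0 := left_ne_zero_of_mul hdet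
  have hinj : ∀ D : Matrix (Fin k) (Fin k) ℤ, D.det ≠ 0 → Function.Injective D.mulVec := by
    intro D hD v w h
    have : D.mulVec (v - w) = 0 := by rw [Matrix.mulVec_sub, h, sub_self]
    exact sub_eq_zero.1 (Matrix.eq_zero_of_mulVec_eq_zero hD this)
  have hCBv : ∀ v, C.mulVec (B.mulVec v) = (M : ℤ) • v := by
    intro v
    rw [Matrix.mulVec_mulVec, hCB, Matrix.smul_mulVec, Matrix.one_mulVec]
  have hBCv : ∀ v, B.mulVec (C.mulVec v) = (M : ℤ) • v := by
    intro v
    apply hinj C hCdet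
    rw [hCBv, Matrix.mulVec_smul]
  have hcast : ∀ (D : Matrix (Fin k) (Fin k) ℤ) (v : Fin k → ℤ),
      (D.map (Int.cast : ℤ → ZMod M)).mulVec (fun i => (v i : ZMod M)) =
        fun i => ((D.mulVec v i : ℤ) : ZMod M) := by
    intro D v
    ext i
    simp [Matrix.mulVec, dotProduct]
  have hzero : ∀ v : Fin k → ℤ, (fun i => ((v i : ℤ) : ZMod M)) = 0 ↔
      ∃ w : Fin k → ℤ, v = (M : ℤ) • w := by
    intro v
    constructor
    · intro h
      have : ∀ i, ∃ c, v i = M * c := fun i =>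
        (ZMod.intCast_zmod_eq_zero_iff_dvd _ _).1 (congrFun h i)
      choose w hw using this
      exact ⟨w, funext fun i => by simp [hw]⟩
    · rintro ⟨w, rfl⟩
      ext i
      simp
  let φ : (Fin k → ℤ) →+ (Fin k → ZMod M) :=
    { toFun := fun z i => ((C.mulVec z i : ℤ) : ZMod M)
      map_zero' := by ext; simp
      map_add' := by intro x y; ext; simp [Matrix.mulVec_add] }
  have hker : φ.ker = (LinearMap.range B.mulVecLin).toAddSubgroup := by
    ext z
    rw [AddMonoidHom.mem_ker]
    change (fun i => ((C.mulVec z i : ℤ) : ZMod M)) = 0 ↔ ∃ w, B.mulVec w = z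
    rw [hzero]
    refine exists_congr fun w => ?_
    rw [← hCBv, (hinj C hCdet).eq_iff, eq_comm]
  have hrange : ∀ y : Fin k → ZMod M,
      (B.map (Int.cast : ℤ → ZMod M)).mulVec y = 0 ↔ y ∈ φ.range := by
    intro y
    obtain ⟨x, rfl⟩ : ∃ x : Fin k → ℤ, (fun i => (x i : ZMod M)) = y :=
      ⟨fun i => (ZMod.intCast_surjective (y i)).choose,
        funext fun i => (ZMod.intCast_surjective (y i)).choose_spec⟩
    rw [hcast, hzero]
    constructor
    · rintro ⟨w, hw⟩
      refine ⟨w, ?_⟩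
      rw [← hBCv] at hw
      rw [hinj B hBdet hw]
      rfl
    · rintro ⟨w, hw⟩
      have h0 : (fun i => (((x - C.mulVec w) i : ℤ) : ZMod M)) = 0 := by
        ext i
        have := congrFun hw i
        change ((C.mulVec w i : ℤ) : ZMod M) = _ at this
        simp [this]
      obtain ⟨u, hu⟩ := (hzero _).1 h0
      refine ⟨w + B.mulVec u, ?_⟩
      rw [← hBCv, Matrix.mulVec_add, hCBv, ← hu, add_sub_cancel]
  rw [Nat.card_congr (Equiv.subtypeEquivRight hrange)]
  rw [← Nat.card_congr (QuotientAddGroup.quotientKerEquivRange φ).toEquiv, hker]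
  have hBinj : Function.Injective B.mulVecLin := hinj B hBdet
  have := Submodule.natAbs_det_equiv (LinearMap.range B.mulVecLin)
    (LinearEquiv.ofInjective B.mulVecLin hBinj)
  have hcomp : (LinearMap.range B.mulVecLin).subtype ∘ₗ
      ((LinearEquiv.ofInjective B.mulVecLin hBinj : _ ≃ₗ[ℤ] _) : _ →ₗ[ℤ] _) =
      Matrix.toLin' B := by
    ext; rfl
  change (LinearMap.det ((LinearMap.range B.mulVecLin).subtype ∘ₗ
      ((LinearEquiv.ofInjective B.mulVecLin hBinj : _ ≃ₗ[ℤ] _) : _ →ₗ[ℤ] _))).natAbs = _ at this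
  rw [hcomp, LinearMap.det_toLin'] at this
  exact this.symm

/-- The determinant of a product `T * A` with `T` wide is a combination of the determinants
obtained by selecting rows of `A`. -/
theorem dvd_det_mul_of_dvd_det_submatrix {t k : ℕ} (T : Matrix (Fin k) (Fin t) ℤ)
    (A : Matrix (Fin t) (Fin k) ℤ) (d : ℤ)
    (hd : ∀ e : Fin k → Fin t, d ∣ (A.submatrix e id).det) : d ∣ (T * A).det := by
  have hrow : T * A = fun i => ∑ l, T i l • A l := by
    ext i j
    simp [Matrix.mul_apply, Finset.sum_apply]
  have : (T * A).det = ∑ e : Fin k → Fin t, (∏ i, T i (e i)) • (A.submatrix e id).det := by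
    rw [hrow]
    change Matrix.detRowAlternating.toMultilinearMap _ = _
    rw [MultilinearMap.map_sum]
    refine Finset.sum_congr rfl fun e _ => ?_
    rw [MultilinearMap.map_smul_univ]
    rfl
  rw [this]
  exact Finset.dvd_sum fun e _ => Dvd.dvd.mul_left (hd e) _

/-- The number of solutions modulo `M` is the gcd of the maximal minors. -/
theorem card_ker_mod_eq_gcd_minors {t k M : ℕ} (hM : M ≠ 0)
    (A : Matrix (Fin t) (Fin k) ℤ)
    (hA : ∀ j : Fin k, ∃ i : Fin t, A i = Pi.single j (M : ℤ)) :
    (Nat.card {y : Fin k → ZMod M // (A.map (Int.cast : ℤ → ZMod M)).mulVec y = 0} : ℤ) =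
      Finset.univ.gcd fun e : Fin k → Fin t => (A.submatrix e id).det := by
  obtain ⟨B, T, C, C', hB, hAC, hC'⟩ :=
    exists_square_matrix_same_row_lattice (by exact_mod_cast hM) A hA
  have hmap : ∀ {a b c : ℕ} (P : Matrix (Fin a) (Fin b) ℤ) (Q : Matrix (Fin b) (Fin c) ℤ),
      (P * Q).map (Int.cast : ℤ → ZMod M) =
        P.map (Int.cast : ℤ → ZMod M) * Q.map (Int.cast : ℤ → ZMod M) := fun P Q =>
    Matrix.map_mul (f := Int.castRingHom (ZMod M))
  have hiff : ∀ y : Fin k → ZMod M, (A.map (Int.cast : ℤ → ZMod M)).mulVec y = 0 ↔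
      (B.map (Int.cast : ℤ → ZMod M)).mulVec y = 0 := by
    intro y
    constructor
    · intro h
      rw [hB, hmap, ← Matrix.mulVec_mulVec, h, Matrix.mulVec_zero]
    · intro h
      rw [hAC, hmap, ← Matrix.mulVec_mulVec, h, Matrix.mulVec_zero]
  rw [Nat.card_congr (Equiv.subtypeEquivRight hiff), card_ker_mod_of_mul_eq_smul_one hM B C' hC']
  apply dvd_antisymm_of_normalize_eq
  · exact Int.normalize_coe_nat _
  · exact Finset.normalize_gcd
  · rw [Int.natAbs_dvd]
    refine Finset.dvd_gcd fun e _ => ?_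
    have : A.submatrix e id = C.submatrix e id * B := by
      conv_lhs => rw [hAC]
      rfl
    rw [this, Matrix.det_mul]
    exact dvd_mul_left _ _
  · rw [Int.dvd_natAbs, hB]
    exact dvd_det_mul_of_dvd_det_submatrix T A _ fun e => Finset.gcd_dvd (Finset.mem_univ e)

open Polynomial in
/-- A nonzero element of minimal degree in an ideal of `ℤ[X]` divides every element of the ideal
up to a nonzero integer factor. -/
theorem exists_C_mul_eq_mul_of_minimal_natDegree {I : Ideal ℤ[X]} {f : ℤ[X]} (hf : f ∈ I)
    (hf0 : f ≠ 0) (hmin : ∀ g ∈ I, g ≠ 0 → f.natDegree ≤ g.natDegree) (g : ℤ[X]) (hg : g ∈ I) :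
    ∃ E : ℤ, E ≠ 0 ∧ f ∣ C E * g := by
  induction hd : g.natDegree using Nat.strong_induction_on generalizing g with
  | _ d ih =>
    by_cases hg0 : g = 0
    · exact ⟨1, one_ne_zero, by simp [hg0]⟩
    have hle := hmin g hg hg0
    have hlf : f.leadingCoeff ≠ 0 := leadingCoeff_ne_zero.2 hf0
    have hlg : g.leadingCoeff ≠ 0 := leadingCoeff_ne_zero.2 hg0
    set u : ℤ[X] := C f.leadingCoeff * g with hu
    set v : ℤ[X] := C g.leadingCoeff * X ^ (g.natDegree - f.natDegree) * f with hv
    have hu0 : u ≠ 0 := mul_ne_zero (C_ne_zero.2 hlf) hg0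
    have hv0 : v ≠ 0 :=
      mul_ne_zero (mul_ne_zero (C_ne_zero.2 hlg) (pow_ne_zero _ X_ne_zero)) hf0
    have hudeg : u.natDegree = g.natDegree := natDegree_C_mul hlf
    have hvdeg : v.natDegree = g.natDegree := by
      rw [hv, mul_assoc, natDegree_C_mul hlg, natDegree_X_pow_mul _ hf0]
      omega
    have hlead : u.leadingCoeff = v.leadingCoeff := by
      simp only [hu, hv, leadingCoeff_mul, leadingCoeff_C, leadingCoeff_X_pow, mul_one]
      exact mul_comm _ _
    have hmem : u - v ∈ I := I.sub_mem (I.mul_mem_left _ hg) (I.mul_mem_left _ hf)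
    have hdeg : (u - v).degree < u.degree :=
      degree_sub_lt_left (by rw [degree_eq_natDegree hu0, degree_eq_natDegree hv0, hudeg, hvdeg])
        hu0 hlead
    have key : ∃ E : ℤ, E ≠ 0 ∧ f ∣ C E * (u - v) := by
      by_cases hw : u - v = 0
      · exact ⟨1, one_ne_zero, by simp [hw]⟩
      · refine ih _ ?_ (u - v) hmem rfl
        rw [← hd, ← hudeg]
        exact natDegree_lt_natDegree hw hdeg
    obtain ⟨E, hE, hdvd⟩ := key
    refine ⟨E * f.leadingCoeff, mul_ne_zero hE hlf, ?_⟩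
    have : C (E * f.leadingCoeff) * g = C E * (u - v) + C E * v := by
      rw [hu, hv, C_mul]
      ring
    rw [this]
    exact dvd_add hdvd (Dvd.dvd.mul_left (Dvd.intro_left _ rfl) _)

open Polynomial in
/-- A finite family of integer polynomials, not all zero, has, up to a nonzero integer factor `E`,
a common divisor `f` whose cofactors generate an ideal containing `E`. -/
theorem exists_common_divisor_with_cofactors {ι : Type*} [Fintype ι] (g : ι → ℤ[X])
    (hg : ∃ e, g e ≠ 0) :
    ∃ (f : ℤ[X]) (E : ℤ) (h u : ι → ℤ[X]), E ≠ 0 ∧ (∀ e, C E * g e = f * h e) ∧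
      ∑ e, u e * h e = C E := by
  classical
  obtain ⟨e₀, he₀⟩ := hg
  set I : Ideal ℤ[X] := Ideal.span (Set.range g) with hI
  have hgI : ∀ e, g e ∈ I := fun e => Ideal.subset_span ⟨e, rfl⟩
  have hex : ∃ d, ∃ p ∈ I, p ≠ 0 ∧ p.natDegree = d := ⟨_, g e₀, hgI e₀, he₀, rfl⟩
  obtain ⟨f, hf, hf0, hfd⟩ := Nat.find_spec hex
  have hmin : ∀ p ∈ I, p ≠ 0 → f.natDegree ≤ p.natDegree := fun p hp hp0 =>
    hfd ▸ Nat.find_min' hex ⟨p, hp, hp0, rfl⟩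
  choose E hE hdvd using fun e =>
    exists_C_mul_eq_mul_of_minimal_natDegree hf hf0 hmin (g e) (hgI e)
  have hdvd' : ∀ e, f ∣ C (∏ e, E e) * g e := by
    intro e
    obtain ⟨c, hc⟩ := Finset.dvd_prod_of_mem E (Finset.mem_univ e)
    rw [hc, mul_comm (E e), C_mul, mul_assoc]
    exact (hdvd e).mul_left _
  choose h hh using hdvd'
  obtain ⟨u, hu⟩ := Ideal.mem_span_range_iff_exists_fun.1 hf
  refine ⟨f, ∏ e, E e, h, u, Finset.prod_ne_zero_iff.2 fun e _ => hE e, hh, ?_⟩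
  apply mul_left_cancel₀ hf0
  calc f * ∑ e, u e * h e = ∑ e, u e * (f * h e) := by
        rw [Finset.mul_sum]
        exact Finset.sum_congr rfl fun e _ => by ring
    _ = C (∏ e, E e) * ∑ e, u e * g e := by
        rw [Finset.mul_sum]
        exact Finset.sum_congr rfl fun e _ => by rw [← hh]; ring
    _ = f * C (∏ e, E e) := by rw [hu, mul_comm]

open Polynomial in
/-- The gcd of the values of integer polynomials generating an ideal that contains `E` is periodic
modulo `E`. -/
theorem gcd_eval_eq_of_dvd_sub {ι : Type*} [Fintype ι] (h u : ι → ℤ[X]) (E : ℤ)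
    (huh : ∑ e, u e * h e = C E) {x y : ℤ} (hxy : E ∣ x - y) :
    (Finset.univ.gcd fun e => (h e).eval x) = Finset.univ.gcd fun e => (h e).eval y := by
  have key : ∀ x y : ℤ, E ∣ x - y →
      (Finset.univ.gcd fun e => (h e).eval x) ∣ Finset.univ.gcd fun e => (h e).eval y := by
    intro x y hxy
    have hE : (Finset.univ.gcd fun e => (h e).eval x) ∣ E := by
      have : E = ∑ e, (u e).eval x * (h e).eval x := by
        rw [← eval_C (a := E) (x := x), ← huh, eval_finsetSum]
        simp
      conv_rhs => rw [this]
      exact Finset.dvd_sum fun e he => Dvd.dvd.mul_left (Finset.gcd_dvd he) _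
    refine Finset.dvd_gcd fun e he => ?_
    have h1 := (hE.trans hxy).trans (sub_dvd_eval_sub x y (h e))
    exact (dvd_sub_right (Finset.gcd_dvd he)).1 h1
  exact dvd_antisymm_of_normalize_eq Finset.normalize_gcd Finset.normalize_gcd
    (key x y hxy) (key y x (dvd_sub_comm.1 hxy))

/-- The functions `q ↦ gcd (q - n) m` with `1 < m` and `0 < n < m`. -/
def shiftedGcds : Set (ℤ → ℚ) :=
  {c | ∃ m n : ℤ, 1 < m ∧ 0 < n ∧ n < m ∧ c = fun q => (Int.gcd (q - n) m : ℚ)}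

/-- The rational span of the constants and the functions in `shiftedGcds`. -/
def shiftedGcdSpan : Submodule ℚ (ℤ → ℚ) :=
  Submodule.span ℚ {1} ⊔ Submodule.span ℚ shiftedGcds

theorem const_mem_shiftedGcdSpan (c : ℚ) : (fun _ => c) ∈ shiftedGcdSpan := by
  refine Submodule.mem_sup_left (Submodule.mem_span_singleton.2 ⟨c, ?_⟩)
  ext
  simp

theorem gcd_sub_emod (q n m : ℤ) : Int.gcd (q - n % m) m = Int.gcd (q - n) m := by
  have : q - n % m = q - n + m * (n / m) := by
    have := Int.emod_add_mul_ediv n m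
    linarith
  rw [this, Int.gcd_add_mul_left_left]

theorem sum_gcd_sub_range (m : ℕ) (q : ℤ) :
    ∑ j ∈ Finset.range m, (Int.gcd (q - j) m : ℚ) =
      ∑ j ∈ Finset.range m, (Int.gcd (0 - j) m : ℚ) := by
  have hper : Function.Periodic
      (fun q : ℤ => ∑ j ∈ Finset.range m, (Int.gcd (q - j) m : ℚ)) 1 := by
    intro q
    have h1 := Finset.sum_range_succ (fun j : ℕ => (Int.gcd (q + 1 - j) m : ℚ)) m
    rw [Finset.sum_range_succ'] at h1
    have h2 : Int.gcd (q + 1 - m) m = Int.gcd (q + 1 - (0 : ℕ)) m := by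
      rw [← gcd_sub_emod (q + 1) m m]
      simp
    rw [h2] at h1
    have h3 := add_right_cancel h1
    simp only [← h3]
    refine Finset.sum_congr rfl fun j _ => ?_
    congr 2
    push_cast
    ring
  simpa using hper.int_mul q 0

theorem gcd_sub_mem_shiftedGcdSpan {m : ℕ} (hm : 0 < m) (n : ℤ) :
    (fun q : ℤ => (Int.gcd (q - n) m : ℚ)) ∈ shiftedGcdSpan := by
  obtain rfl | hm1 : m = 1 ∨ 1 < m := by omega
  · simpa using const_mem_shiftedGcdSpan 1
  have hpos : ∀ n : ℤ, 0 < n → n < m →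
      (fun q : ℤ => (Int.gcd (q - n) m : ℚ)) ∈ shiftedGcdSpan := fun n h0 h1 =>
    Submodule.mem_sup_right (Submodule.subset_span
      ⟨m, n, by exact_mod_cast hm1, h0, h1, rfl⟩)
  simp_rw [← gcd_sub_emod _ n]
  have h0 := Int.emod_nonneg n (b := m) (by omega)
  have h1 := Int.emod_lt_of_pos n (b := m) (by omega)
  obtain h0 | h0 := h0.lt_or_eq
  · exact hpos _ h0 h1
  rw [← h0]
  obtain ⟨l, rfl⟩ : ∃ l, m = l + 1 := ⟨m - 1, by omega⟩
  have : (fun q : ℤ => (Int.gcd (q - 0) (l + 1 : ℕ) : ℚ)) =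
      (fun _ => ∑ j ∈ Finset.range (l + 1), (Int.gcd (0 - j) (l + 1 : ℕ) : ℚ)) -
        ∑ j ∈ Finset.range l, fun q : ℤ => (Int.gcd (q - (j + 1 : ℕ)) (l + 1 : ℕ) : ℚ) := by
    ext q
    rw [Pi.sub_apply, ← sum_gcd_sub_range _ q, Finset.sum_range_succ', Finset.sum_apply]
    simp
  rw [this]
  refine Submodule.sub_mem _ (const_mem_shiftedGcdSpan _) (Submodule.sum_mem _ fun j hj => ?_)
  have := Finset.mem_range.1 hj
  exact hpos _ (by positivity) (by exact_mod_cast Nat.succ_lt_succ this)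

open Classical in
theorem dvd_indicator_mem_shiftedGcdSpan {m : ℕ} (hm : 0 < m) (n : ℤ) :
    (fun q : ℤ => if (m : ℤ) ∣ q - n then (1 : ℚ) else 0) ∈ shiftedGcdSpan := by
  induction m using Nat.strong_induction_on with
  | _ m ih =>
    have hsum : ∀ q : ℤ, (Int.gcd (q - n) m : ℚ) =
        ∑ d ∈ m.divisors, (d.totient : ℚ) * if (d : ℤ) ∣ q - n then (1 : ℚ) else 0 := by
      intro q
      conv_lhs => rw [← Nat.sum_totient (Int.gcd (q - n) m)]
      push_cast
      simp only [mul_ite, mul_one, mul_zero]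
      rw [← Finset.sum_filter]
      refine Finset.sum_congr ?_ fun _ _ => rfl
      ext d
      have hg : Int.gcd (q - n) m ≠ 0 := by
        rw [Ne, Int.gcd_eq_zero_iff]
        omega
      simp only [Nat.mem_divisors, Finset.mem_filter, hg, hm.ne', ne_eq, not_false_eq_true,
        and_true]
      rw [← Int.natCast_dvd_natCast, Int.dvd_coe_gcd_iff, Int.natCast_dvd_natCast]
      tauto
    have hφ : (m.totient : ℚ) ≠ 0 := by exact_mod_cast (Nat.totient_pos.2 hm).ne'
    have : (fun q : ℤ => if (m : ℤ) ∣ q - n then (1 : ℚ) else 0) =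
        (m.totient : ℚ)⁻¹ • ((fun q : ℤ => (Int.gcd (q - n) m : ℚ)) -
          ∑ d ∈ m.properDivisors, (d.totient : ℚ) •
            fun q : ℤ => if (d : ℤ) ∣ q - n then (1 : ℚ) else 0) := by
      ext q
      rw [Pi.smul_apply, Pi.sub_apply, hsum, ← Nat.insert_self_properDivisors hm.ne',
        Finset.sum_insert Nat.self_notMem_properDivisors, Finset.sum_apply]
      simp only [Pi.smul_apply, smul_eq_mul]
      rw [add_sub_cancel_right, inv_mul_cancel_left₀ hφ]
    rw [this]
    refine Submodule.smul_mem _ _ (Submodule.sub_mem _ (gcd_sub_mem_shiftedGcdSpan hm n)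
      (Submodule.sum_mem _ fun d hd => Submodule.smul_mem _ _ ?_))
    exact ih d (Nat.mem_properDivisors.1 hd).2 (Nat.pos_of_mem_properDivisors hd)

/-- Every periodic rational-valued function on `ℤ` lies in `shiftedGcdSpan`. -/
theorem mem_shiftedGcdSpan_of_periodic {m : ℕ} (hm : 0 < m) (c : ℤ → ℚ)
    (hc : ∀ x y : ℤ, (m : ℤ) ∣ x - y → c x = c y) : c ∈ shiftedGcdSpan := by
  classical
  have : c = ∑ j ∈ Finset.range m, c j •
      fun q : ℤ => if (m : ℤ) ∣ q - (j : ℤ) then (1 : ℚ) else 0 := by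
    ext q
    have h0 := Int.emod_nonneg q (b := m) (by omega)
    have h1 := Int.emod_lt_of_pos q (b := m) (by omega)
    have h2 : (m : ℤ) ∣ q - ((q % m).toNat : ℤ) := by
      rw [Int.toNat_of_nonneg h0]
      exact Int.dvd_self_sub_emod
    rw [Finset.sum_apply, Finset.sum_eq_single (q % m).toNat]
    · simp only [Pi.smul_apply, smul_eq_mul, if_pos h2, mul_one]
      exact hc _ _ h2
    · intro j hj hne
      have hj := Finset.mem_range.1 hj
      have : ¬ (m : ℤ) ∣ q - j := by
        intro h
        have := Int.emod_eq_emod_iff_emod_sub_eq_zero.2 (Int.emod_eq_zero_of_dvd h)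
        rw [Int.emod_eq_of_lt (a := (j : ℤ)) (by omega) (by omega)] at this
        omega
      simp [this]
    · intro h
      exact absurd (Finset.mem_range.2 (by omega)) h
  rw [this]
  exact Submodule.sum_mem _ fun j _ =>
    Submodule.smul_mem _ _ (dvd_indicator_mem_shiftedGcdSpan hm _)

theorem exists_of_mem_shiftedGcdSpan {c : ℤ → ℚ} (hc : c ∈ shiftedGcdSpan) :
    ∃ (r : ℕ) (α : ℚ) (a : Fin r → ℚ) (m : Fin r → ℤ) (nn : Fin r → ℤ),
      (∀ i, 1 < m i) ∧ (∀ i, 0 < nn i ∧ nn i < m i) ∧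
      ∀ q : ℤ, c q = α + ∑ i, a i * (Int.gcd (q - nn i) (m i) : ℚ) := by
  obtain ⟨x, hx, y, hy, rfl⟩ := Submodule.mem_sup.1 hc
  obtain ⟨α, rfl⟩ := Submodule.mem_span_singleton.1 hx
  obtain ⟨r, a, g, rfl⟩ := Submodule.mem_span_set'.1 hy
  choose m nn hm h0 h1 hg using fun i => (g i).2
  refine ⟨r, α, a, m, nn, hm, fun i => ⟨h0 i, h1 i⟩, fun q => ?_⟩
  simp [Finset.sum_apply, hg]


/-- Let `A` be a matrix over `ℤ[X]` with `k` columns whose rows include `(X^n - 1)·e_j`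
for every `j`. Then the number of solutions `y ∈ (ℤ/(qⁿ-1)ℤ)^k` of `A(q)·y = 0`,
as a function of `q ≥ 2`, is a PORC function of the explicit form
`(α + ∑ᵢ αᵢ gcd(q - nᵢ, mᵢ))·|f(q)|`. -/
theorem card_solutions_PORC (n k : ℕ) (hn : 0 < n) (hk : 0 < k) (t : ℕ)
    (A : Matrix (Fin t) (Fin k) (Polynomial ℤ))
    (hA : ∀ j : Fin k, ∃ i : Fin t, A i = Pi.single j (Polynomial.X ^ n - 1)) :
    ∃ (f : Polynomial ℤ) (r : ℕ) (α : ℚ) (a : Fin r → ℚ) (m : Fin r → ℤ) (nn : Fin r → ℤ),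
      (∀ i, 1 < m i) ∧ (∀ i, 0 < nn i ∧ nn i < m i) ∧
      ∀ q : ℕ, 2 ≤ q →
        (Nat.card {y : Fin k → ZMod (q ^ n - 1) //
            (A.map fun p => ((p.eval (q : ℤ) : ℤ) : ZMod (q ^ n - 1))).mulVec y = 0} : ℚ) =
          (α + ∑ i, a i * (Int.gcd ((q : ℤ) - nn i) (m i) : ℚ)) *
            ((|f.eval (q : ℤ)| : ℤ) : ℚ) := by
  classical
  set g : (Fin k → Fin t) → Polynomial ℤ := fun e => (A.submatrix e id).det with hg
  have hg0 : ∃ e, g e ≠ 0 := by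
    choose e he using hA
    refine ⟨e, ?_⟩
    have : A.submatrix e id = Matrix.diagonal fun _ => Polynomial.X ^ n - 1 := by
      ext1 i j
      rw [Matrix.submatrix_apply, he, Matrix.diagonal_apply, Pi.single_apply]
      simp [eq_comm]
    rw [hg]
    simp only [this, Matrix.det_diagonal]
    exact Finset.prod_ne_zero_iff.2 fun _ _ => Polynomial.X_pow_sub_C_ne_zero hn 1
  obtain ⟨f, E, h, u, hE, hgh, huh⟩ := exists_common_divisor_with_cofactors g hg0
  have hEq : (|E| : ℚ) ≠ 0 := by simpa using hE
  let c : ℤ → ℚ := fun q =>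
    (|E| : ℚ)⁻¹ * ((Finset.univ.gcd fun e => (h e).eval q : ℤ) : ℚ)
  have hc : c ∈ shiftedGcdSpan := by
    refine mem_shiftedGcdSpan_of_periodic (Int.natAbs_pos.2 hE) c fun x y hxy => ?_
    simp only [c]
    rw [gcd_eval_eq_of_dvd_sub h u E huh (Int.natAbs_dvd.1 hxy)]
  obtain ⟨r, α, a, m, nn, hm, hnn, hrep⟩ := exists_of_mem_shiftedGcdSpan hc
  refine ⟨f, r, α, a, m, nn, hm, hnn, fun q hq => ?_⟩
  rw [← hrep]
  have hqn : 1 < q ^ n := Nat.one_lt_pow hn.ne' hq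
  have hM : q ^ n - 1 ≠ 0 := by omega
  have hMcast : ((q ^ n - 1 : ℕ) : ℤ) = (q : ℤ) ^ n - 1 := by
    rw [Nat.cast_sub hqn.le]
    simp
  have hcard := card_ker_mod_eq_gcd_minors hM (A.map fun p => p.eval (q : ℤ)) (by
    intro j
    obtain ⟨i, hi⟩ := hA j
    refine ⟨i, ?_⟩
    ext l
    rw [Matrix.map_apply, hi, hMcast]
    by_cases hl : l = j
    · subst hl
      simp
    · simp [hl])
  rw [Matrix.map_map] at hcard
  have hdet : ∀ e : Fin k → Fin t,
      ((A.map fun p => p.eval (q : ℤ)).submatrix e id).det = (g e).eval (q : ℤ) := by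
    intro e
    rw [hg, ← Polynomial.coe_evalRingHom, RingHom.map_det]
    rfl
  simp only [hdet] at hcard
  have hmul : |E| * (Finset.univ.gcd fun e => (g e).eval (q : ℤ)) =
      |f.eval (q : ℤ)| * Finset.univ.gcd fun e => (h e).eval (q : ℤ) := by
    rw [Int.abs_eq_normalize, Int.abs_eq_normalize, ← Finset.gcd_mul_left, ← Finset.gcd_mul_left]
    congr 1
    ext e
    simpa using congrArg (Polynomial.eval (q : ℤ)) (hgh e)
  rw [← hcard] at hmul
  have hmulq : (|E| : ℚ) * (Nat.card {y : Fin k → ZMod (q ^ n - 1) //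
      (A.map fun p => ((p.eval (q : ℤ) : ℤ) : ZMod (q ^ n - 1))).mulVec y = 0} : ℚ) =
      ((|f.eval (q : ℤ)| : ℤ) : ℚ) *
        ((Finset.univ.gcd fun e => (h e).eval (q : ℤ) : ℤ) : ℚ) := by
    exact_mod_cast hmul
  apply mul_left_cancel₀ hEq
  rw [hmulq]
  simp only [c]
  rw [← mul_assoc, mul_inv_cancel_left₀ hEq, mul_comm]
end
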